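/- (Fidelity benchmark for equatorial qubit states.) Let Ω := (1/4)(|0⟩⟨0|⊗|0⟩⟨0| + |1⟩⟨1|⊗|1⟩⟨1| + 2|Ψ⁺⟩⟨Ψ⁺|) on ℂ²⊗ℂ², with |Ψ⁺⟩ = (|0⟩⊗|1⟩ + |1⟩⊗|0⟩)/√2 (this is the performance operator of the fidelity test for uniformly distributed pure states on the equator of the Bloch sphere). Then the maximum of Tr[C Ω] over all separable positive semidefinite operators C on ℂ²⊗ℂ² with Tr_{A'}[C] = I₂ equals 3/4. Hence any average fidelity above 3/4 for the equatorial-state teleportation test certifies an advantage over all measure-and-prepare channels. -/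

import Mathlib

open Matrix Kronecker BigOperators ComplexOrder

noncomputable section

/-- A separable operator on `ℂ² ⊗ ℂ²`: a finite sum of tensor products of
positive semidefinite operators. -/
def Separable {d' d : ℕ} (C : Matrix (Fin d' × Fin d) (Fin d' × Fin d) ℂ) : Prop :=
  ∃ (n : ℕ) (A : Fin n → Matrix (Fin d') (Fin d') ℂ)
    (B : Fin n → Matrix (Fin d) (Fin d) ℂ),
    (∀ k, (A k).PosSemidef) ∧ (∀ k, (B k).PosSemidef) ∧ C = ∑ k, A k ⊗ₖ B k

/-- Partial trace over the first tensor factor. -/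
def trA' {d' d : ℕ} (C : Matrix (Fin d' × Fin d) (Fin d' × Fin d) ℂ) :
    Matrix (Fin d) (Fin d) ℂ :=
  Matrix.of fun i j => ∑ i', C (i', i) (i', j)

/-- Rank-one projector `|v⟩⟨v|` onto a vector. -/
def outer {ι : Type*} (v : ι → ℂ) : Matrix ι ι ℂ :=
  Matrix.vecMulVec v (star v)

/-- The two-qubit vector `|Ψ⁺⟩ = (|01⟩ + |10⟩)/√2`. -/
def psiPlus : Fin 2 × Fin 2 → ℂ :=
  fun p => if p.1 ≠ p.2 then ((Real.sqrt 2 : ℂ))⁻¹ else 0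

/-- The standard basis vectors of `ℂ²`. -/
def e0 : Fin 2 → ℂ := ![1, 0]
def e1 : Fin 2 → ℂ := ![0, 1]

/-- The performance operator of the equatorial-qubit fidelity test. -/
def eqOmega : Matrix (Fin 2 × Fin 2) (Fin 2 × Fin 2) ℂ :=
  ((4 : ℂ))⁻¹ • (outer e0 ⊗ₖ outer e0 + outer e1 ⊗ₖ outer e1 + (2 : ℂ) • outer psiPlus)

lemma outer_app {ι : Type*} (v : ι → ℂ) (i j : ι) : outer v i j = v i * star (v j) := rfl

lemma trace_formula (C : Matrix (Fin 2 × Fin 2) (Fin 2 × Fin 2) ℂ) :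
    (C * eqOmega).trace = 4⁻¹ * (C (0,0) (0,0) + C (0,1) (0,1) + C (1,0) (1,0) + C (1,1) (1,1)
      + C (0,1) (1,0) + C (1,0) (0,1)) := by
  have h : ((Real.sqrt 2 : ℂ))⁻¹ * ((Real.sqrt 2 : ℂ))⁻¹ = 2⁻¹ := by
    rw [← mul_inv, ← Complex.ofReal_mul, Real.mul_self_sqrt (by norm_num)]
    norm_num
  simp [Matrix.trace, Matrix.mul_apply, Fintype.sum_prod_type, eqOmega, outer_app, psiPlus, e0, e1,
    Matrix.kroneckerMap_apply, h]
  ring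

lemma psd_facts {A : Matrix (Fin 2) (Fin 2) ℂ} (hA : A.PosSemidef) :
    0 ≤ (A 0 0).re ∧ 0 ≤ (A 1 1).re ∧ (A 0 0).im = 0 ∧ (A 1 1).im = 0 ∧
    (A 0 1).re = (A 1 0).re ∧ (A 0 1).im = - (A 1 0).im ∧
    (A 1 0).re ^ 2 + (A 1 0).im ^ 2 ≤ (A 0 0).re * (A 1 1).re := by
  have h0 := hA.diag_nonneg (i := 0)
  have h1 := hA.diag_nonneg (i := 1)
  have hd := hA.det_nonneg
  have hh := hA.isHermitian.apply 0 1
  rw [Complex.le_def] at h0 h1 hd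
  rw [Matrix.det_fin_two] at hd
  have e1 : (A 0 1).re = (A 1 0).re := by rw [← hh]; simp
  have e2 : (A 0 1).im = - (A 1 0).im := by rw [← hh]; simp
  simp at h0 h1 hd
  refine ⟨h0.1, h1.1, h0.2.symm, h1.2.symm, e1, e2, ?_⟩
  have := hd.1
  rw [e1, e2, ← h0.2, ← h1.2] at this
  nlinarith

lemma real_ineq {a d x y e h u v : ℝ} (ha : 0 ≤ a) (hd : 0 ≤ d) (he : 0 ≤ e) (hh : 0 ≤ h)
    (h1 : x ^ 2 + y ^ 2 ≤ a * d) (h2 : u ^ 2 + v ^ 2 ≤ e * h) :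
    4 * (x * u + y * v) ≤ (a + d) * (e + h) := by
  have hp : 0 ≤ (a + d) * (e + h) := by positivity
  apply le_of_sq_le_sq _ hp
  have k1 : 4 * (x ^ 2 + y ^ 2) ≤ (a + d) ^ 2 := by nlinarith [sq_nonneg (a - d)]
  have k2 : 4 * (u ^ 2 + v ^ 2) ≤ (e + h) ^ 2 := by nlinarith [sq_nonneg (e - h)]
  have k3 := mul_le_mul k1 k2 (by positivity) (by positivity)
  nlinarith [sq_nonneg (x * v - y * u)]

lemma term_ineq {A B : Matrix (Fin 2) (Fin 2) ℂ} (hA : A.PosSemidef) (hB : B.PosSemidef) :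
    2 * (A 0 1 * B 1 0 + A 1 0 * B 0 1).re ≤
      (A 0 0 * B 0 0 + A 0 0 * B 1 1 + A 1 1 * B 0 0 + A 1 1 * B 1 1).re := by
  obtain ⟨a1, a2, a3, a4, a5, a6, a7⟩ := psd_facts hA
  obtain ⟨b1, b2, b3, b4, b5, b6, b7⟩ := psd_facts hB
  have := real_ineq a1 a2 b1 b2 a7 b7
  simp only [Complex.add_re, Complex.mul_re, a3, a4, a5, a6, b3, b4, b5, b6]
  nlinarith

lemma outer_psd (v : Fin 2 → ℂ) : (outer v).PosSemidef :=
  Matrix.posSemidef_vecMulVec_self_star v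

/-- fidelity benchmark for equatorial qubit states: the maximum of
`Tr[C Ω]` over separable positive semidefinite `C` on `ℂ²⊗ℂ²` with `Tr_{A'}[C] = I`
equals `3/4`, where `Ω` is the performance operator of the equatorial-state
fidelity test. -/
theorem equatorial_benchmark :
    IsGreatest
      { s : ℝ | ∃ C : Matrix (Fin 2 × Fin 2) (Fin 2 × Fin 2) ℂ,
          Separable C ∧ C.PosSemidef ∧ trA' C = 1 ∧
          s = ((C * eqOmega).trace).re }
      (3 / 4 : ℝ) := by
  constructor
  · let A : Fin 2 → Matrix (Fin 2) (Fin 2) ℂ :=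
      fun k => (2⁻¹ : ℂ) • outer (![![1, 1], ![1, -1]] k)
    have hA : ∀ k, (A k).PosSemidef := fun k =>
      (outer_psd _).smul (by norm_num [Complex.le_def])
    refine ⟨∑ k, A k ⊗ₖ A k, ⟨2, A, A, hA, hA, rfl⟩, ?_, ?_, ?_⟩
    · exact Matrix.posSemidef_sum _ fun k _ => (hA k).kronecker (hA k)
    · ext i j
      fin_cases i <;> fin_cases j <;>
        simp [trA', A, outer_app, Fin.sum_univ_two] <;> norm_num
    · rw [trace_formula]
      simp [A, outer_app, Fin.sum_univ_two]
      norm_num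
  · rintro s ⟨C, ⟨n, A, B, hA, hB, rfl⟩, -, ht, rfl⟩
    have t0 := congrArg Complex.re (congrFun (congrFun ht 0) 0)
    have t1 := congrArg Complex.re (congrFun (congrFun ht 1) 1)
    have hs := Finset.sum_le_sum fun k (_ : k ∈ Finset.univ) => term_ineq (hA k) (hB k)
    rw [trace_formula]
    have h4 : (4⁻¹ : ℂ) = ((4⁻¹ : ℝ) : ℂ) := by norm_num
    rw [h4, Complex.re_ofReal_mul]
    simp only [trA', Matrix.of_apply, Fin.sum_univ_two, Matrix.sum_apply,
      Matrix.kroneckerMap_apply, Complex.add_re, Complex.re_sum, Matrix.one_apply_eq,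
      Complex.one_re, Finset.sum_add_distrib, ← Finset.mul_sum] at t0 t1 hs ⊢
    linarith

end
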